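/- arXiv:2506.09594 — 2 statements merged into one kernel-verified Lean document; each statement's English description precedes it below -/
import Mathlib

section
/- Let λ > 0 and a > 2, and define the SCAD penalty φ : ℝ → ℝ by φ(x) = λ|x| for |x| ≤ λ; φ(x) = (2aλ|x| − x² − λ²)/(2(a − 1)) for λ < |x| ≤ aλ; and φ(x) = (a + 1)λ²/2 for |x| > aλ. For v ∈ ℝ define x* = sign(v)·max(|v| − λ, 0) if |v| ≤ 2λ; x* = sign(v)·((a − 1)|v| − aλ)/(a − 2) if 2λ < |v| ≤ aλ; and x* = v if |v| > aλ. Then x* is a global minimizer over ℝ of f(x) = φ(x) + (1/2)(x − v)². -/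
/-!
For `1 < a` the SCAD penalty fails to be convex by at most a quadratic of modulus
`ρ = (a - 1)⁻¹`: at each point `p` it has some slope `g` for which the concave parabola
`x ↦ φ p + g (x - p) - (ρ / 2) (x - p) ^ 2` stays below `φ`. When `2 < a` we have `ρ ≤ 1`, so the
term `(1 / 2) (x - v) ^ 2` makes up for this defect, and `p` is a global minimizer as soon as it is
stationary, that is, as soon as `v - p` is such a slope. The three branches of `x*` solve
`v - p = g` on the linear, quadratic and constant pieces of the penalty.
-/

section ProximalSubgradient

variable {E : Type*} [NormedAddCommGroup E] [InnerProductSpace ℝ E]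
  {f : E → ℝ} {ρ : ℝ} {p g : E}

/-- `g` is a proximal subgradient of `f` at `p` with modulus `ρ`. The supporting inequality is
required globally, not only near `p`, so that it certifies global minimality. -/
def IsProximalSubgradient (f : E → ℝ) (ρ : ℝ) (p g : E) : Prop :=
  ∀ x, f p + inner ℝ g (x - p) - ρ / 2 * ‖x - p‖ ^ 2 ≤ f x

namespace IsProximalSubgradient

theorem neg (h : IsProximalSubgradient f ρ p g) (hf : f.Even) :
    IsProximalSubgradient f ρ (-p) (-g) := by
  intro x
  have hx := h (-x)
  have hsub : -x - p = -(x - -p) := by abel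
  rwa [hsub, norm_neg, inner_neg_right, ← inner_neg_left, hf, ← hf p] at hx

theorem add_half_sq_le {v : E} (h : IsProximalSubgradient f ρ p (v - p)) (hρ : ρ ≤ 1) (x : E) :
    f p + 1 / 2 * ‖p - v‖ ^ 2 ≤ f x + 1 / 2 * ‖x - v‖ ^ 2 := by
  have hexpand : ‖x - v‖ ^ 2 = ‖x - p‖ ^ 2 - 2 * inner ℝ (v - p) (x - p) + ‖p - v‖ ^ 2 := by
    rw [← sub_sub_sub_cancel_right x v p, norm_sub_sq_real, real_inner_comm, norm_sub_rev p v]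
  have hmodulus : ρ * ‖x - p‖ ^ 2 ≤ ‖x - p‖ ^ 2 := mul_le_of_le_one_left (sq_nonneg _) hρ
  linarith [h x]

end IsProximalSubgradient

theorem isProximalSubgradient_real_iff {f : ℝ → ℝ} {ρ p g : ℝ} :
    IsProximalSubgradient f ρ p g ↔
      ∀ x, f p + g * (x - p) - ρ / 2 * (x - p) ^ 2 ≤ f x := by
  simp only [IsProximalSubgradient, Real.inner_apply, Real.norm_eq_abs, sq_abs]

end ProximalSubgradient

section Penalty

variable {lam a : ℝ}

/-- The quadratic piece of the SCAD penalty as a function of the magnitude, extended to all of `ℝ`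
so that it can serve as a minorant of the whole penalty. -/
noncomputable def scadQuad (lam a t : ℝ) : ℝ :=
  (2 * a * lam * t - t ^ 2 - lam ^ 2) / (2 * (a - 1))

/-- The SCAD penalty with threshold `lam` and shape parameter `a`. -/
noncomputable def scadPenalty (lam a x : ℝ) : ℝ :=
  if |x| ≤ lam then lam * |x|
  else if |x| ≤ a * lam then scadQuad lam a |x|
  else (a + 1) * lam ^ 2 / 2

theorem scadQuad_eq_taylor (ha : 1 < a) (s t : ℝ) :
    scadQuad lam a t =
      scadQuad lam a s + (a * lam - s) / (a - 1) * (t - s) - (a - 1)⁻¹ / 2 * (t - s) ^ 2 := by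
  have : a - 1 ≠ 0 := (sub_pos.2 ha).ne'
  unfold scadQuad
  field_simp
  ring

theorem scadQuad_eq_linear_sub (ha : 1 < a) (t : ℝ) :
    scadQuad lam a t = lam * t - (a - 1)⁻¹ / 2 * (t - lam) ^ 2 := by
  have : a - 1 ≠ 0 := (sub_pos.2 ha).ne'
  unfold scadQuad
  field_simp
  ring

theorem scadQuad_eq_const_sub (ha : 1 < a) (t : ℝ) :
    scadQuad lam a t = (a + 1) * lam ^ 2 / 2 - (a - 1)⁻¹ / 2 * (t - a * lam) ^ 2 := by
  have : a - 1 ≠ 0 := (sub_pos.2 ha).ne'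
  unfold scadQuad
  field_simp
  ring

theorem scadQuad_le_scadQuad_abs (ha : 1 < a) (hlam : 0 ≤ lam) (x : ℝ) :
    scadQuad lam a x ≤ scadQuad lam a |x| := by
  have : 0 < a - 1 := sub_pos.2 ha
  unfold scadQuad
  rw [sq_abs]
  gcongr
  exact le_abs_self x

theorem scadPenalty_even : (scadPenalty lam a).Even := fun x => by
  simp only [scadPenalty, abs_neg]

theorem scadPenalty_of_abs_le {x : ℝ} (hx : |x| ≤ lam) : scadPenalty lam a x = lam * |x| :=
  if_pos hx

theorem scadPenalty_of_lt_of_le {x : ℝ} (hx : lam < |x|) (hxa : |x| ≤ a * lam) :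
    scadPenalty lam a x = scadQuad lam a |x| := by
  rw [scadPenalty, if_neg hx.not_ge, if_pos hxa]

theorem scadPenalty_of_lt {x : ℝ} (ha : 1 ≤ a) (hlam : 0 ≤ lam) (hx : a * lam < |x|) :
    scadPenalty lam a x = (a + 1) * lam ^ 2 / 2 := by
  have hlx : lam < |x| := (le_mul_of_one_le_left hlam ha).trans_lt hx
  rw [scadPenalty, if_neg hlx.not_ge, if_neg hx.not_ge]

theorem scadQuad_abs_le_scadPenalty (ha : 1 < a) (x : ℝ) :
    scadQuad lam a |x| ≤ scadPenalty lam a x := by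
  have hρ : 0 ≤ (a - 1)⁻¹ / 2 := by have := sub_pos.2 ha; positivity
  unfold scadPenalty
  split_ifs
  · rw [scadQuad_eq_linear_sub ha]
    exact sub_le_self _ (mul_nonneg hρ (sq_nonneg _))
  · exact le_rfl
  · rw [scadQuad_eq_const_sub ha]
    exact sub_le_self _ (mul_nonneg hρ (sq_nonneg _))

theorem isProximalSubgradient_scadPenalty_of_abs_le {s g : ℝ} (ha : 1 < a) (hs : |s| ≤ lam)
    (hg : |g| ≤ lam) (hgs : g * s = lam * |s|) :
    IsProximalSubgradient (scadPenalty lam a) (a - 1)⁻¹ s g := by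
  rw [isProximalSubgradient_real_iff]
  intro x
  have hρ : 0 ≤ (a - 1)⁻¹ / 2 := by have := sub_pos.2 ha; positivity
  have hlinear : lam * |s| + g * (x - s) ≤ lam * |x| :=
    calc lam * |s| + g * (x - s) = g * x := by rw [← hgs]; ring
      _ ≤ |g| * |x| := (le_abs_self _).trans (abs_mul g x).le
      _ ≤ lam * |x| := by gcongr
  rw [scadPenalty_of_abs_le hs]
  rcases le_or_gt |x| lam with hx | hx
  · rw [scadPenalty_of_abs_le hx]
    linarith [mul_nonneg hρ (sq_nonneg (x - s))]
  · have hdist : (|x| - lam) ^ 2 ≤ (x - s) ^ 2 := by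
      rw [← sq_abs (x - s)]
      exact pow_le_pow_left₀ (sub_nonneg.2 hx.le) (by linarith [abs_sub_abs_le_abs_sub x s]) 2
    have hquad := scadQuad_abs_le_scadPenalty (lam := lam) ha x
    rw [scadQuad_eq_linear_sub ha] at hquad
    linarith [mul_le_mul_of_nonneg_left hdist hρ]

theorem isProximalSubgradient_scadPenalty_of_lt_of_le {s : ℝ} (ha : 1 < a)
    (hs : lam < s) (hsa : s ≤ a * lam) :
    IsProximalSubgradient (scadPenalty lam a) (a - 1)⁻¹ s ((a * lam - s) / (a - 1)) := by
  rw [isProximalSubgradient_real_iff]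
  intro x
  have hlam : 0 < lam := pos_of_mul_pos_right (by linarith : 0 < (a - 1) * lam) (sub_pos.2 ha).le
  have hs_abs : |s| = s := abs_of_pos (hlam.trans hs)
  rw [scadPenalty_of_lt_of_le (by rwa [hs_abs]) (by rwa [hs_abs]), hs_abs,
    ← scadQuad_eq_taylor ha]
  exact (scadQuad_le_scadQuad_abs ha hlam.le x).trans (scadQuad_abs_le_scadPenalty ha x)

theorem isProximalSubgradient_scadPenalty_zero_of_lt {s : ℝ} (ha : 1 < a) (hlam : 0 ≤ lam)
    (hs : a * lam < |s|) :
    IsProximalSubgradient (scadPenalty lam a) (a - 1)⁻¹ s 0 := by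
  rw [isProximalSubgradient_real_iff]
  intro x
  have hρ : 0 ≤ (a - 1)⁻¹ / 2 := by have := sub_pos.2 ha; positivity
  rw [scadPenalty_of_lt ha.le hlam hs]
  rcases le_or_gt |x| (a * lam) with hx | hx
  · have hdist : (|x| - a * lam) ^ 2 ≤ (x - s) ^ 2 := by
      rw [← neg_sq, neg_sub, ← sq_abs (x - s), abs_sub_comm x s]
      exact pow_le_pow_left₀ (sub_nonneg.2 hx) (by linarith [abs_sub_abs_le_abs_sub s x]) 2
    have hquad := scadQuad_abs_le_scadPenalty (lam := lam) ha x
    rw [scadQuad_eq_const_sub ha] at hquad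
    linarith [mul_le_mul_of_nonneg_left hdist hρ]
  · rw [scadPenalty_of_lt ha.le hlam hx]
    linarith [mul_nonneg hρ (sq_nonneg (x - s))]

end Penalty

section Prox

variable {lam a v : ℝ}

/-- The closed-form proximity operator of `scadPenalty lam a` for `0 < lam` and `2 < a`. -/
noncomputable def scadProx (lam a v : ℝ) : ℝ :=
  if |v| ≤ 2 * lam then Real.sign v * max (|v| - lam) 0
  else if |v| ≤ a * lam then Real.sign v * (((a - 1) * |v| - a * lam) / (a - 2))
  else v

theorem scadProx_odd : (scadProx lam a).Odd := fun v => by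
  simp only [scadProx, abs_neg, Real.sign_neg, neg_mul]
  split_ifs <;> rfl

theorem scadProx_of_nonneg (hlam : 0 ≤ lam) (hv : 0 ≤ v) :
    scadProx lam a v =
      if v ≤ 2 * lam then max (v - lam) 0
      else if v ≤ a * lam then ((a - 1) * v - a * lam) / (a - 2)
      else v := by
  rcases hv.eq_or_lt with rfl | hpos
  · rw [scadProx_odd.map_zero, if_pos (by positivity), zero_sub, max_eq_right (neg_nonpos.2 hlam)]
  · simp only [scadProx, Real.sign_of_pos hpos, abs_of_pos hpos, one_mul]

theorem isProximalSubgradient_scadPenalty_softThreshold (ha : 1 < a) (hv : 0 ≤ v)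
    (hv2 : v ≤ 2 * lam) :
    IsProximalSubgradient (scadPenalty lam a) (a - 1)⁻¹ (max (v - lam) 0)
      (v - max (v - lam) 0) := by
  have hlam : 0 ≤ lam := by linarith
  rcases le_total v lam with h | h
  · rw [max_eq_right (sub_nonpos.2 h), sub_zero]
    exact isProximalSubgradient_scadPenalty_of_abs_le ha (by rwa [abs_zero])
      (by rwa [abs_of_nonneg hv]) (by rw [abs_zero, mul_zero, mul_zero])
  · have hsoft : 0 ≤ v - lam := sub_nonneg.2 h
    rw [max_eq_left hsoft, sub_sub_cancel]
    exact isProximalSubgradient_scadPenalty_of_abs_le ha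
      (by rw [abs_of_nonneg hsoft]; linarith) (abs_of_nonneg hlam).le
      (by rw [abs_of_nonneg hsoft])

theorem isProximalSubgradient_scadPenalty_rescale (ha : 2 < a) (hv2 : 2 * lam < v)
    (hva : v ≤ a * lam) :
    IsProximalSubgradient (scadPenalty lam a) (a - 1)⁻¹ (((a - 1) * v - a * lam) / (a - 2))
      (v - ((a - 1) * v - a * lam) / (a - 2)) := by
  have ha1 : 0 < a - 1 := by linarith
  have ha2 : 0 < a - 2 := sub_pos.2 ha
  set s := ((a - 1) * v - a * lam) / (a - 2) with hs
  have hlam_lt : lam < s := by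
    rw [hs, lt_div_iff₀ ha2]
    linarith [mul_lt_mul_of_pos_left hv2 ha1]
  have hle : s ≤ a * lam := by
    rw [hs, div_le_iff₀ ha2]
    linarith [mul_le_mul_of_nonneg_left hva ha1.le]
  have hstationary : v - s = (a * lam - s) / (a - 1) := by
    rw [hs]
    field_simp
    ring
  rw [hstationary]
  exact isProximalSubgradient_scadPenalty_of_lt_of_le (by linarith) hlam_lt hle

theorem isProximalSubgradient_scadProx_of_nonneg (ha : 2 < a) (hlam : 0 ≤ lam) (hv : 0 ≤ v) :
    IsProximalSubgradient (scadPenalty lam a) (a - 1)⁻¹ (scadProx lam a v)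
      (v - scadProx lam a v) := by
  have ha1 : 1 < a := one_lt_two.trans ha
  rw [scadProx_of_nonneg hlam hv]
  split_ifs with hv2 hva
  · exact isProximalSubgradient_scadPenalty_softThreshold ha1 hv hv2
  · exact isProximalSubgradient_scadPenalty_rescale ha (not_le.1 hv2) hva
  · rw [sub_self]
    exact isProximalSubgradient_scadPenalty_zero_of_lt ha1 hlam
      ((not_le.1 hva).trans_le (le_abs_self v))

theorem isProximalSubgradient_scadProx (ha : 2 < a) (hlam : 0 ≤ lam) (v : ℝ) :
    IsProximalSubgradient (scadPenalty lam a) (a - 1)⁻¹ (scadProx lam a v)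
      (v - scadProx lam a v) := by
  rcases le_total 0 v with hv | hv
  · exact isProximalSubgradient_scadProx_of_nonneg ha hlam hv
  · have h :=
      (isProximalSubgradient_scadProx_of_nonneg ha hlam (neg_nonneg.2 hv)).neg scadPenalty_even
    rwa [scadProx_odd, neg_neg, neg_sub_neg, neg_sub] at h

end Prox

/-- Closed-form proximity operator of the SCAD (smoothly clipped absolute deviation)
penalty: the point `x*` (soft-thresholded, linearly rescaled, or identity, according to
the magnitude of `v`) is a global minimizer of `x ↦ φ(x) + (1/2)(x − v)²`. -/
theorem scad_prox_global_min (lam a : ℝ) (hlam : 0 < lam) (ha : 2 < a)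
    (φ : ℝ → ℝ)
    (hφ : ∀ x : ℝ, φ x =
      if |x| ≤ lam then lam * |x|
      else if |x| ≤ a * lam then (2 * a * lam * |x| - x ^ 2 - lam ^ 2) / (2 * (a - 1))
      else (a + 1) * lam ^ 2 / 2)
    (v : ℝ) (xstar : ℝ)
    (hx : xstar =
      if |v| ≤ 2 * lam then Real.sign v * max (|v| - lam) 0
      else if |v| ≤ a * lam then Real.sign v * (((a - 1) * |v| - a * lam) / (a - 2))
      else v) :
    ∀ x : ℝ, φ xstar + (1 / 2) * (xstar - v) ^ 2 ≤ φ x + (1 / 2) * (x - v) ^ 2 := by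
  obtain rfl : φ = scadPenalty lam a := funext fun x => by
    rw [hφ, scadPenalty, scadQuad, sq_abs]
  obtain rfl : xstar = scadProx lam a v := hx
  have hmodulus : (a - 1)⁻¹ ≤ 1 := inv_le_one_of_one_le₀ (by linarith)
  intro x
  simpa only [Real.norm_eq_abs, sq_abs] using
    (isProximalSubgradient_scadProx ha hlam.le v).add_half_sq_le hmodulus x
end

section
/- Let λ > 0, θ > 0 and v ∈ ℝ, and define the capped-ℓ₁ penalty φ(x) = λ·min(|x|, θ). Set x₁ = sign(v)·min(max(|v| − λ, 0), θ) and x₂ = sign(v)·max(|v|, θ), and let f(x) = φ(x) + (1/2)(x − v)². Then min(f(x₁), f(x₂)) ≤ f(x) for all x ∈ ℝ; in particular, whichever of x₁, x₂ attains the smaller objective value is a global minimizer of f. -/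
/-!
The penalty depends only on `|x|` and is nondecreasing in it, so reflecting to the side of `v`
reduces the problem to minimizing over `t = |x| ≥ 0` with `v` replaced by `|v|`. On `[0, θ]` and on
`[θ, ∞)` the objective is, up to a constant, half the squared distance from `t` to `|v| - λ` and to
`|v|` respectively, so on each piece it is minimized by the projection of that centre onto the
piece.
-/

open Set

section Projection

variable {α : Type*} [AddCommGroup α] [LinearOrder α] [IsOrderedAddMonoid α] {a b t : α}

lemma abs_max_sub_self_le (x : α) (ht : a ≤ t) : |max x a - x| ≤ |t - x| := by
  rcases le_total x a with hxa | hax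
  · rw [max_eq_right hxa]
    exact abs_le_abs_of_nonneg (sub_nonneg.2 hxa) (sub_le_sub_right ht x)
  · rw [max_eq_left hax, sub_self, abs_zero]
    exact abs_nonneg _

lemma abs_min_max_sub_self_le (x : α) (ht : t ∈ Icc a b) :
    |min (max x a) b - x| ≤ |t - x| := by
  rcases le_total x b with hxb | hbx
  · rw [min_eq_left (max_le hxb (ht.1.trans ht.2))]
    exact abs_max_sub_self_le x ht.1
  · rw [min_eq_right (hbx.trans (le_max_left x a)), abs_sub_comm b, abs_sub_comm t]
    exact abs_le_abs_of_nonneg (sub_nonneg.2 hbx) (sub_le_sub_left ht.2 x)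

end Projection

section Sign

lemma abs_realSign_le_one (v : ℝ) : |Real.sign v| ≤ 1 := by
  rcases Real.sign_apply_eq v with h | h | h <;> simp [h]

lemma realSign_mul_abs (v : ℝ) : Real.sign v * |v| = v := by
  rcases lt_trichotomy v 0 with hv | rfl | hv
  · rw [Real.sign_of_neg hv, abs_of_neg hv, neg_one_mul, neg_neg]
  · rw [abs_zero, mul_zero]
  · rw [Real.sign_of_pos hv, abs_of_pos hv, one_mul]

lemma abs_realSign_mul_le (v s : ℝ) : |Real.sign v * s| ≤ |s| := by
  rw [abs_mul]
  exact mul_le_of_le_one_left (abs_nonneg s) (abs_realSign_le_one v)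

lemma abs_realSign_mul_sub_le (v s : ℝ) : |Real.sign v * s - v| ≤ |(s - |v|)| :=
  calc |Real.sign v * s - v| = |Real.sign v * (s - |v|)| := by rw [mul_sub, realSign_mul_abs]
    _ ≤ |(s - |v|)| := abs_realSign_mul_le v _

end Sign

/-- The function minimized by the proximity operator of the penalty `φ` at `v`. -/
noncomputable def proxObjective (φ : ℝ → ℝ) (v x : ℝ) : ℝ :=
  φ x + (1 / 2) * (x - v) ^ 2

section EvenPenalty

variable {φ : ℝ → ℝ} {s : ℝ}

lemma proxObjective_le_of_le_of_abs_sub_le {v w x y : ℝ} (hφ : φ x ≤ φ y)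
    (h : |x - v| ≤ |y - w|) : proxObjective φ v x ≤ proxObjective φ w y :=
  add_le_add hφ (mul_le_mul_of_nonneg_left (sq_le_sq.2 h) one_half_pos.le)

lemma proxObjective_abs_le (hφ : ∀ x, φ |x| = φ x) (v x : ℝ) :
    proxObjective φ |v| |x| ≤ proxObjective φ v x :=
  proxObjective_le_of_le_of_abs_sub_le (hφ x).le (abs_abs_sub_abs_le x v)

lemma proxObjective_sign_mul_le (hφ : ∀ x, φ |x| = φ x) (hmono : MonotoneOn φ (Ici 0))
    (v : ℝ) (hs : 0 ≤ s) : proxObjective φ v (Real.sign v * s) ≤ proxObjective φ |v| s := by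
  have hpenalty : φ (Real.sign v * s) ≤ φ s := by
    rw [← hφ]
    exact hmono (mem_Ici.2 (abs_nonneg _)) hs
      ((abs_realSign_mul_le v s).trans_eq (abs_of_nonneg hs))
  exact proxObjective_le_of_le_of_abs_sub_le hpenalty (abs_realSign_mul_sub_le v s)

lemma proxObjective_sign_mul_le_of_isMinOn {S : Set ℝ} {v x : ℝ}
    (h : IsMinOn (proxObjective φ |v|) S s) (hφ : ∀ x, φ |x| = φ x)
    (hmono : MonotoneOn φ (Ici 0)) (hs : 0 ≤ s) (hx : |x| ∈ S) :
    proxObjective φ v (Real.sign v * s) ≤ proxObjective φ v x :=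
  calc proxObjective φ v (Real.sign v * s)
      ≤ proxObjective φ |v| s := proxObjective_sign_mul_le hφ hmono v hs
    _ ≤ proxObjective φ |v| |x| := h hx
    _ ≤ proxObjective φ v x := proxObjective_abs_le hφ v x

end EvenPenalty

/-- The capped-ℓ₁ penalty with weight `lam` and cap `θ`. -/
def cappedL1 (lam θ x : ℝ) : ℝ :=
  lam * min |x| θ

section CappedL1

variable {lam θ t : ℝ}

lemma cappedL1_abs (lam θ x : ℝ) : cappedL1 lam θ |x| = cappedL1 lam θ x := by
  rw [cappedL1, abs_abs, cappedL1]

lemma monotoneOn_cappedL1 (hlam : 0 ≤ lam) (θ : ℝ) : MonotoneOn (cappedL1 lam θ) (Ici 0) :=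
  fun _ ha _ _ hab ↦
    mul_le_mul_of_nonneg_left (min_le_min_right θ (abs_le_abs_of_nonneg ha hab)) hlam

lemma proxObjective_cappedL1_of_mem_Icc (lam w : ℝ) (ht : t ∈ Icc 0 θ) :
    proxObjective (cappedL1 lam θ) w t =
      lam * (w - lam / 2) + (1 / 2) * (t - (w - lam)) ^ 2 := by
  rw [proxObjective, cappedL1, abs_of_nonneg ht.1, min_eq_left ht.2]
  ring

lemma proxObjective_cappedL1_of_le_abs (lam w : ℝ) (ht : θ ≤ |t|) :
    proxObjective (cappedL1 lam θ) w t = lam * θ + (1 / 2) * (t - w) ^ 2 := by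
  rw [proxObjective, cappedL1, min_eq_right ht]

lemma isMinOn_proxObjective_cappedL1_Icc (lam θ w : ℝ) :
    IsMinOn (proxObjective (cappedL1 lam θ) w) (Icc 0 θ) (min (max (w - lam) 0) θ) := by
  intro t ht
  have hproj : min (max (w - lam) 0) θ ∈ Icc 0 θ :=
    ⟨le_min (le_max_right _ _) (ht.1.trans ht.2), min_le_right _ _⟩
  rw [mem_ofPred_eq, proxObjective_cappedL1_of_mem_Icc lam w hproj,
    proxObjective_cappedL1_of_mem_Icc lam w ht]
  have hsq := sq_le_sq.2 (abs_min_max_sub_self_le (w - lam) ht)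
  gcongr

lemma isMinOn_proxObjective_cappedL1_Ici (lam θ w : ℝ) :
    IsMinOn (proxObjective (cappedL1 lam θ) w) (Ici θ) (max w θ) := by
  intro t ht
  have hproj : θ ≤ |max w θ| := (le_max_right w θ).trans (le_abs_self _)
  rw [mem_ofPred_eq, proxObjective_cappedL1_of_le_abs lam w hproj,
    proxObjective_cappedL1_of_le_abs lam w (ht.trans (le_abs_self t))]
  have hsq := sq_le_sq.2 (abs_max_sub_self_le w ht)
  gcongr

end CappedL1

/-- Proximity operator of the capped-ℓ₁ penalty `φ(x) = λ·min(|x|, θ)`: with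
`x₁ = sign(v)·min(max(|v| − λ, 0), θ)` and `x₂ = sign(v)·max(|v|, θ)`, one has
`min(f(x₁), f(x₂)) ≤ f(x)` for all `x`, where `f(x) = φ(x) + (1/2)(x − v)²`. -/
theorem capped_l1_prox_global_min (lam θ v : ℝ) (hlam : 0 < lam) (hθ : 0 < θ)
    (φ : ℝ → ℝ) (hφ : ∀ x : ℝ, φ x = lam * min |x| θ)
    (x₁ x₂ : ℝ)
    (h₁ : x₁ = Real.sign v * min (max (|v| - lam) 0) θ)
    (h₂ : x₂ = Real.sign v * max |v| θ)
    (f : ℝ → ℝ) (hf : ∀ x : ℝ, f x = φ x + (1 / 2) * (x - v) ^ 2) :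
    ∀ x : ℝ, min (f x₁) (f x₂) ≤ f x := by
  obtain rfl : φ = cappedL1 lam θ := funext hφ
  obtain rfl : f = proxObjective (cappedL1 lam θ) v := funext hf
  have habs := cappedL1_abs lam θ
  have hmono := monotoneOn_cappedL1 hlam.le θ
  intro x
  subst h₁ h₂
  rcases le_total |x| θ with hx | hx
  · have hs : 0 ≤ min (max (|v| - lam) 0) θ := le_min (le_max_right _ _) hθ.le
    exact min_le_of_left_le <| proxObjective_sign_mul_le_of_isMinOn
      (isMinOn_proxObjective_cappedL1_Icc lam θ |v|) habs hmono hs ⟨abs_nonneg x, hx⟩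
  · have hs : 0 ≤ max |v| θ := (abs_nonneg v).trans (le_max_left _ _)
    exact min_le_of_right_le <| proxObjective_sign_mul_le_of_isMinOn
      (isMinOn_proxObjective_cappedL1_Ici lam θ |v|) habs hmono hs hx
end
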